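/- Let b_1,…,b_N be i.i.d. N(0, (1/N) I_{n−1}) Gaussian vectors and v ∈ ℝ^N a fixed vector. There is a universal constant C > 0 such that for any δ ∈ (0,1), with probability at least 1−δ, |Σ_{i=1}^N (‖b_i‖² − (n−1)/N) v_i²| ≤ C( (√(n·log(1/δ))/N)·‖v‖₄² + (√n·log(1/δ)/N)·‖v‖_∞² ). -/

import Mathlib

open MeasureTheory ProbabilityTheory Matrix

/-- ℓ_p norm of a vector in `ℝ^k`. -/
noncomputable def lpNorm {k : ℕ} (p : ℝ) (v : Fin k → ℝ) : ℝ := (∑ i, |v i| ^ p) ^ (1 / p)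

/-- Supremum (ℓ_∞) norm of a vector in `ℝ^k`. -/
noncomputable def supNorm {k : ℕ} (v : Fin k → ℝ) : ℝ := ⨆ i, |v i|

/-- The Gaussian measure `N(0, σ2 · I_k)` on `ℝ^k`. -/
noncomputable def gaussVec (k : ℕ) (σ2 : NNReal) : Measure (Fin k → ℝ) :=
  Measure.pi fun _ => gaussianReal 0 σ2

instance (k : ℕ) (σ2 : NNReal) : IsProbabilityMeasure (gaussVec k σ2) := by
  unfold gaussVec; infer_instance

/-- The law of `N` i.i.d. samples from `N(0, σ2 · I_k)`. -/
noncomputable def iidGaussVec (N k : ℕ) (σ2 : NNReal) : Measure (Fin N → Fin k → ℝ) :=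
  Measure.pi fun _ => gaussVec k σ2

/-!
Write `S x = ∑ i, w i (x i ² - 1)` for a standard Gaussian vector `x`, and `s = √(∑ i, w i ²)`. With
`w` constant equal to `σ² v i ²` on the coordinates of `b i`, the sum to be bounded has the law of
`S`. When `L = log (1 / δ)` is bounded below, the claim is Bernstein's inequality for the
sub-exponential variable `S`.

As `δ → 1` a two-sided tail bound says nothing, and one needs `ℙ(|S| ≤ C s ε) ≥ ε` for small `ε`.
Comparing second and fourth moments shows that `S` takes each sign with probability bounded below.
Take independent `x`, `y` with `S x < 0 < S y`: the path `θ ↦ S (cos θ • x + sin θ • y)` on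
`[0, π / 2]` vanishes somewhere and, for most `x`, `y`, is Lipschitz with constant of order `s`, so
it stays of size `s ε` for a set of angles of length of order `ε`. Every point of the path has the
law of `x`, so integrating over `θ` gives the bound.
-/

section SubexponentialMGF

variable {Ω : Type*} {mΩ : MeasurableSpace Ω} {μ : Measure Ω} {X : Ω → ℝ} {V b : ℝ}

/-- `X` is centred sub-exponential with variance proxy `V` and scale `b`:
`𝔼 exp (t X) ≤ exp (V t²)` for `|t| ≤ 1 / b`. The range of `t` is written `|t| * b ≤ 1`, so that
`b = 0` allows every `t`; the factor `1 / 2` of the sub-Gaussian convention is absorbed in `V`. -/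
structure HasSubexponentialMGF (X : Ω → ℝ) (V b : ℝ) (μ : Measure Ω) : Prop where
  integrable_exp_mul : ∀ t, |t| * b ≤ 1 → Integrable (fun ω => Real.exp (t * X ω)) μ
  mgf_le : ∀ t, |t| * b ≤ 1 → mgf X μ t ≤ Real.exp (V * t ^ 2)

namespace HasSubexponentialMGF

lemma mono_scale {b' : ℝ} (h : HasSubexponentialMGF X V b μ) (hb : b ≤ b') :
    HasSubexponentialMGF X V b' μ where
  integrable_exp_mul t ht := h.integrable_exp_mul t (le_trans (by gcongr) ht)
  mgf_le t ht := h.mgf_le t (le_trans (by gcongr) ht)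

lemma const_mul (h : HasSubexponentialMGF X V b μ) (c : ℝ) :
    HasSubexponentialMGF (fun ω => c * X ω) (V * c ^ 2) (|c| * b) μ where
  integrable_exp_mul t ht := by
    have := h.integrable_exp_mul (t * c) (by rwa [abs_mul, mul_assoc])
    simpa only [mul_assoc] using this
  mgf_le t ht := by
    rw [mgf_const_mul]
    refine (h.mgf_le (c * t) (by rwa [abs_mul, mul_comm |c|, mul_assoc])).trans_eq ?_
    ring_nf

lemma neg (h : HasSubexponentialMGF X V b μ) : HasSubexponentialMGF (fun ω => -X ω) V b μ := by
  simpa using h.const_mul (-1)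

lemma comp_measurePreserving {Ω' : Type*} {mΩ' : MeasurableSpace Ω'} {ν : Measure Ω'}
    (h : HasSubexponentialMGF X V b μ) (hX : AEMeasurable X μ) {f : Ω' → Ω}
    (hf : MeasurePreserving f ν μ) : HasSubexponentialMGF (X ∘ f) V b ν where
  integrable_exp_mul t ht := hf.integrable_comp_of_integrable (h.integrable_exp_mul t ht)
  mgf_le t ht := by
    have hmap : mgf X (ν.map f) t = mgf (X ∘ f) ν t :=
      mgf_map hf.aemeasurable (by rw [hf.map_eq]; fun_prop)
    rw [← hmap, hf.map_eq]
    exact h.mgf_le t ht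

lemma sum_of_iIndepFun [IsFiniteMeasure μ] {ι : Type*} {Y : ι → Ω → ℝ} {W : ι → ℝ}
    (hindep : iIndepFun Y μ) (hmeas : ∀ i, Measurable (Y i)) (s : Finset ι)
    (h : ∀ i ∈ s, HasSubexponentialMGF (Y i) (W i) b μ) :
    HasSubexponentialMGF (∑ i ∈ s, Y i) (∑ i ∈ s, W i) b μ where
  integrable_exp_mul t ht :=
    hindep.integrable_exp_mul_sum hmeas fun i hi => (h i hi).integrable_exp_mul t ht
  mgf_le t ht := by
    rw [hindep.mgf_sum hmeas, Finset.sum_mul, Real.exp_sum]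
    exact Finset.prod_le_prod (fun _ _ => mgf_nonneg) fun i hi => (h i hi).mgf_le t ht

lemma zero_mem_interior_integrableExpSet (h : HasSubexponentialMGF X V b μ) :
    0 ∈ interior (integrableExpSet X μ) := by
  have hcont : Continuous fun t : ℝ => |t| * b := by fun_prop
  have hsmall : ∀ᶠ t : ℝ in nhds 0, |t| * b < 1 :=
    hcont.continuousAt.eventually_lt continuousAt_const (by simp)
  exact mem_interior_iff_mem_nhds.2 (hsmall.mono fun t ht => h.integrable_exp_mul t ht.le)

lemma memLp (h : HasSubexponentialMGF X V b μ) (p : NNReal) : MemLp X p μ :=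
  memLp_of_mem_interior_integrableExpSet h.zero_mem_interior_integrableExpSet p

lemma pow_four_mul_integral_pow_four_le (h : HasSubexponentialMGF X V b μ) {t : ℝ}
    (ht : |t| * b ≤ 1) : t ^ 4 * ∫ ω, X ω ^ 4 ∂μ ≤ 48 * Real.exp (V * t ^ 2) := by
  have ht' : |-t| * b ≤ 1 := by rwa [abs_neg]
  have hpos := h.integrable_exp_mul t ht
  have hneg := h.integrable_exp_mul (-t) ht'
  have pointwise (z : ℝ) : z ^ 4 ≤ 24 * (Real.exp z + Real.exp (-z)) := by
    have := Real.pow_div_factorial_le_exp |z| (abs_nonneg z) 4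
    rw [Even.pow_abs (by decide), div_le_iff₀ (by positivity)] at this
    norm_num [Nat.factorial] at this
    linarith [Real.exp_abs_le z]
  calc t ^ 4 * ∫ ω, X ω ^ 4 ∂μ = ∫ ω, (t * X ω) ^ 4 ∂μ := by
        simp only [mul_pow, integral_const_mul]
    _ ≤ ∫ ω, 24 * (Real.exp (t * X ω) + Real.exp (-t * X ω)) ∂μ :=
        integral_mono_of_nonneg (.of_forall fun ω => by positivity)
          ((hpos.add hneg).const_mul 24)
          (.of_forall fun ω => by simpa only [neg_mul] using pointwise (t * X ω))
    _ = 24 * (mgf X μ t + mgf X μ (-t)) := by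
        rw [integral_const_mul, integral_add hpos hneg]; rfl
    _ ≤ 24 * (Real.exp (V * t ^ 2) + Real.exp (V * (-t) ^ 2)) := by
        gcongr
        exacts [h.mgf_le t ht, h.mgf_le (-t) ht']
    _ = 48 * Real.exp (V * t ^ 2) := by rw [neg_sq]; ring

-- Chernoff's bound at `t = √L / (√V + b √L)`, for which `t b ≤ 1`, `V t² ≤ L` and
-- `t (√(V L) + b L) = L`.
lemma measureReal_ge_le [IsFiniteMeasure μ] (h : HasSubexponentialMGF X V b μ) (hV : 0 < V)
    (hb : 0 ≤ b) {L : ℝ} (hL : 0 ≤ L) :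
    μ.real {ω | 2 * (√(V * L) + b * L) ≤ X ω} ≤ Real.exp (-L) := by
  have hd : 0 < √V + b * √L := by positivity
  set t := √L / (√V + b * √L) with ht
  have ht0 : 0 ≤ t := by positivity
  have htb : |t| * b ≤ 1 := by
    rw [abs_of_nonneg ht0, ht, div_mul_eq_mul_div, div_le_one hd]
    linarith [Real.sqrt_nonneg V]
  have htV : V * t ^ 2 ≤ L := by
    have : √V * t ≤ √L := by
      rw [ht, mul_div_assoc', div_le_iff₀ hd]
      nlinarith [mul_nonneg hb (mul_self_nonneg √L)]
    calc V * t ^ 2 = (√V * t) ^ 2 := by rw [mul_pow, Real.sq_sqrt hV.le]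
      _ ≤ √L ^ 2 := by gcongr
      _ = L := Real.sq_sqrt hL
  have htL : t * (√(V * L) + b * L) = L :=
    calc t * (√(V * L) + b * L) = t * (√V + b * √L) * √L := by
          rw [Real.sqrt_mul hV.le]
          linear_combination -(t * b) * Real.mul_self_sqrt hL
      _ = √L * √L := by rw [ht, div_mul_cancel₀ _ hd.ne']
      _ = L := Real.mul_self_sqrt hL
  calc μ.real {ω | 2 * (√(V * L) + b * L) ≤ X ω}
      ≤ Real.exp (-t * (2 * (√(V * L) + b * L))) * mgf X μ t :=
        measure_ge_le_exp_mul_mgf _ ht0 (h.integrable_exp_mul t htb)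
    _ ≤ Real.exp (-2 * L) * Real.exp L := by
        refine mul_le_mul (Real.exp_le_exp.2 (by linarith))
          ((h.mgf_le t htb).trans (Real.exp_le_exp.2 htV)) mgf_nonneg (Real.exp_nonneg _)
    _ = Real.exp (-L) := by rw [← Real.exp_add]; ring_nf

lemma measureReal_abs_ge_le [IsFiniteMeasure μ] (h : HasSubexponentialMGF X V b μ) (hV : 0 < V)
    (hb : 0 ≤ b) {L : ℝ} (hL : 0 ≤ L) :
    μ.real {ω | 2 * (√(V * L) + b * L) ≤ |X ω|} ≤ 2 * Real.exp (-L) := by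
  have hunion : {ω | 2 * (√(V * L) + b * L) ≤ |X ω|} =
      {ω | 2 * (√(V * L) + b * L) ≤ X ω} ∪ {ω | 2 * (√(V * L) + b * L) ≤ -X ω} := by
    ext ω; simp only [Set.mem_ofPred_eq, Set.mem_union, le_abs]
  rw [hunion, two_mul (Real.exp _)]
  exact (measureReal_union_le _ _).trans
    (add_le_add (h.measureReal_ge_le hV hb hL) (h.neg.measureReal_ge_le hV hb hL))

end HasSubexponentialMGF

end SubexponentialMGF

section PositiveProbability

variable {Ω : Type*} {mΩ : MeasurableSpace Ω} {μ : Measure Ω} [IsFiniteMeasure μ] {X : Ω → ℝ}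

lemma add_sq_sub_pow_four_le_indicator_Ioi (y : ℝ) :
    y + y ^ 2 - y ^ 4 ≤ (Set.Ioi 0).indicator (fun _ => 2) y := by
  by_cases hy : 0 < y
  · rw [Set.indicator_of_mem (Set.mem_Ioi.2 hy)]
    nlinarith [sq_nonneg (y ^ 2 - 1), sq_nonneg (y - 1)]
  · rw [Set.indicator_of_notMem (by simpa using hy)]
    rcases le_total (-1) y with h1 | h1
    · nlinarith [sq_nonneg (y ^ 2)]
    · nlinarith [sq_nonneg (y ^ 2), mul_nonneg (sq_nonneg y) (show 0 ≤ y ^ 2 - 1 by nlinarith)]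

lemma mul_integral_sq_sub_le_measureReal_pos (hX : MemLp X 4 μ) (hmean : ∫ ω, X ω ∂μ = 0)
    {a : ℝ} (ha : 0 < a) :
    a ^ 2 * ∫ ω, X ω ^ 2 ∂μ - a ^ 4 * ∫ ω, X ω ^ 4 ∂μ ≤ 2 * μ.real {ω | 0 < X ω} := by
  have h1 : Integrable X μ := hX.integrable (by norm_num)
  have h2 : Integrable (fun ω => X ω ^ 2) μ := (hX.mono_exponent (by norm_num)).integrable_sq
  have h4 : Integrable (fun ω => X ω ^ 4) μ :=
    (hX.integrable_norm_pow (p := 4) (by norm_num)).congr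
      (.of_forall fun ω => Even.pow_abs (by decide) (X ω))
  have hpos : NullMeasurableSet {ω | 0 < X ω} μ :=
    nullMeasurableSet_lt aemeasurable_const h1.aemeasurable
  calc a ^ 2 * ∫ ω, X ω ^ 2 ∂μ - a ^ 4 * ∫ ω, X ω ^ 4 ∂μ
      = ∫ ω, (a * X ω + a ^ 2 * X ω ^ 2 - a ^ 4 * X ω ^ 4) ∂μ := by
        rw [integral_sub (f := fun ω => a * X ω + a ^ 2 * X ω ^ 2)
            ((h1.const_mul _).add (h2.const_mul _)) (h4.const_mul _),
          integral_add (h1.const_mul _) (h2.const_mul _)]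
        simp only [integral_const_mul, hmean, mul_zero, zero_add]
    _ ≤ ∫ ω, {ω | 0 < X ω}.indicator (fun _ => 2) ω ∂μ := by
        refine integral_mono (((h1.const_mul _).add (h2.const_mul _)).sub (h4.const_mul _))
          ((integrable_const (2 : ℝ)).indicator₀ hpos) fun ω => ?_
        simpa [Set.indicator_apply, ha, mul_pow] using
          add_sq_sub_pow_four_le_indicator_Ioi (a * X ω)
    _ = 2 * μ.real {ω | 0 < X ω} := by
        rw [integral_indicator₀ hpos, setIntegral_const, smul_eq_mul, mul_comm]

lemma sq_integral_sq_le_integral_pow_four_mul_measureReal_pos (hX : MemLp X 4 μ)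
    (hmean : ∫ ω, X ω ∂μ = 0) :
    (∫ ω, X ω ^ 2 ∂μ) ^ 2 ≤ 8 * (∫ ω, X ω ^ 4 ∂μ) * μ.real {ω | 0 < X ω} := by
  have h2 : 0 ≤ ∫ ω, X ω ^ 2 ∂μ := integral_nonneg fun ω => by positivity
  have h4 : 0 ≤ ∫ ω, X ω ^ 4 ∂μ := integral_nonneg fun ω => by positivity
  have hdiscrim := discrim_le_zero (a := ∫ ω, X ω ^ 4 ∂μ) (b := -∫ ω, X ω ^ 2 ∂μ)
    (c := 2 * μ.real {ω | 0 < X ω}) fun x => by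
      rcases le_or_gt x 0 with hx | hx
      · nlinarith [mul_self_nonneg x, measureReal_nonneg (μ := μ) (s := {ω | 0 < X ω})]
      · have := mul_integral_sq_sub_le_measureReal_pos hX hmean (Real.sqrt_pos.2 hx)
        rw [show √x ^ 4 = (√x ^ 2) ^ 2 by ring, Real.sq_sqrt hx.le] at this
        linarith
  rw [discrim] at hdiscrim
  linarith

end PositiveProbability

section RotationSmallBall

open scoped ENNReal NNReal

lemma ofReal_le_volume_abs_le_inter_Icc {g : ℝ → ℝ} {Λ : ℝ≥0} (hg : LipschitzWith Λ g) {a b η : ℝ}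
    (hab : a ≤ b) (ha : g a ≤ 0) (hb : 0 ≤ g b) :
    ENNReal.ofReal η ≤ volume ({θ | |g θ| ≤ Λ * η} ∩ Set.Icc a (b + η)) := by
  obtain ⟨θ₀, hθ₀, hzero⟩ := intermediate_value_Icc hab hg.continuous.continuousOn ⟨ha, hb⟩
  calc ENNReal.ofReal η = volume (Set.Icc θ₀ (θ₀ + η)) := by
        rw [Real.volume_Icc, add_sub_cancel_left]
    _ ≤ volume ({θ | |g θ| ≤ Λ * η} ∩ Set.Icc a (b + η)) := by
        refine measure_mono fun θ hθ => ⟨?_, hθ₀.1.trans hθ.1, hθ.2.trans (by linarith [hθ₀.2])⟩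
        have hdist : |θ - θ₀| ≤ η := by
          rw [abs_of_nonneg (sub_nonneg.2 hθ.1)]; linarith [hθ.2]
        have hlip := hg.dist_le_mul θ θ₀
        rw [Real.dist_eq, Real.dist_eq, hzero, sub_zero] at hlip
        exact hlip.trans (by gcongr)

lemma mul_measure_le_mul_measure_univ_of_section_le {Ω Θ : Type*} {mΩ : MeasurableSpace Ω}
    {mΘ : MeasurableSpace Θ} {P : Measure Ω} {ρ : Measure Θ} [SFinite P] [SFinite ρ]
    {A : Set (Ω × Θ)} (hA : MeasurableSet A) {G : Set Ω} {c q : ℝ≥0∞}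
    (hG : ∀ ω ∈ G, c ≤ ρ (Prod.mk ω ⁻¹' A)) (hq : ∀ θ, P ((fun ω => (ω, θ)) ⁻¹' A) ≤ q) :
    c * P G ≤ q * ρ Set.univ :=
  calc c * P G ≤ c * P {ω | c ≤ ρ (Prod.mk ω ⁻¹' A)} := by gcongr; exact hG
    _ ≤ ∫⁻ ω, ρ (Prod.mk ω ⁻¹' A) ∂P :=
        mul_meas_ge_le_lintegral (measurable_measure_prodMk_left hA) c
    _ = ∫⁻ θ, P ((fun ω => (ω, θ)) ⁻¹' A) ∂ρ := by
        rw [← Measure.prod_apply hA, Measure.prod_apply_symm hA]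
    _ ≤ q * ρ Set.univ := (lintegral_mono hq).trans_eq (lintegral_const q)

variable {E : Type*} [NormedAddCommGroup E] [NormedSpace ℝ E]

/-- The vector at angle `θ` on the ellipse from `p.1` to `p.2`; for a centred Gaussian measure `μ`
every `rotate θ` pushes `μ.prod μ` forward to `μ`. -/
noncomputable def rotate (θ : ℝ) (p : E × E) : E := Real.cos θ • p.1 + Real.sin θ • p.2

lemma rotate_zero (p : E × E) : rotate 0 p = p.1 := by simp [rotate]

lemma rotate_pi_div_two (p : E × E) : rotate (Real.pi / 2) p = p.2 := by simp [rotate]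

variable [SecondCountableTopology E] [MeasurableSpace E] [BorelSpace E]

lemma measurable_rotate_uncurry : Measurable fun q : (E × E) × ℝ => rotate q.2 q.1 := by
  unfold rotate; fun_prop

variable [CompleteSpace E] {μ : Measure E} [IsGaussian μ]

lemma measurePreserving_rotate (hμ : μ[id] = 0) (θ : ℝ) :
    MeasurePreserving (rotate θ) (μ.prod μ) μ := by
  refine ⟨by unfold rotate; fun_prop, ?_⟩
  have hrot := congrArg (Measure.map Prod.fst) (IsGaussian.map_rotation_eq_self hμ θ)
  rwa [Measure.map_map measurable_fst (by fun_prop), Measure.map_fst_prod, measure_univ,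
    one_smul] at hrot

-- On `G` the path `θ ↦ f (rotate θ p)` crosses zero, so it stays in `[-Λη, Λη]` for a set of angles
-- of length at least `η`; integrate over `θ` and `p`.
lemma mul_measureReal_le_measureReal_abs_le_of_rotate (hμ : μ[id] = 0) {f : E → ℝ}
    (hf : Measurable f) {Λ : ℝ≥0} {G : Set (E × E)}
    (hG : ∀ p ∈ G, f p.1 ≤ 0 ∧ 0 ≤ f p.2 ∧ LipschitzWith Λ fun θ => f (rotate θ p))
    {η : ℝ} (hη : 0 ≤ η) :
    η * (μ.prod μ).real G ≤ (Real.pi / 2 + η) * μ.real {x | |f x| ≤ Λ * η} := by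
  set B := {x | |f x| ≤ Λ * η}
  have hB : MeasurableSet B := measurableSet_le hf.abs measurable_const
  set ρ := (volume : Measure ℝ).restrict (Set.Icc 0 (Real.pi / 2 + η))
  have havg : ENNReal.ofReal η * (μ.prod μ) G ≤ μ B * ρ Set.univ := by
    refine mul_measure_le_mul_measure_univ_of_section_le (measurable_rotate_uncurry hB)
      (fun p hp => ?_) fun θ => ((measurePreserving_rotate hμ θ).measure_preimage
        hB.nullMeasurableSet).le
    obtain ⟨hneg, hpos, hlip⟩ := hG p hp
    exact (ofReal_le_volume_abs_le_inter_Icc hlip (by positivity) (by rwa [rotate_zero])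
      (by rwa [rotate_pi_div_two])).trans (Measure.le_restrict_apply _ _)
  have hreal := ENNReal.toReal_mono (by finiteness) havg
  rw [ENNReal.toReal_mul, ENNReal.toReal_mul, ENNReal.toReal_ofReal hη, Measure.restrict_apply_univ,
    Real.volume_Icc, sub_zero, ENNReal.toReal_ofReal (by positivity),
    mul_comm (μ B).toReal] at hreal
  exact hreal

end RotationSmallBall

section StandardGaussian

open scoped Nat

lemma integral_pow_two_mul_gaussianReal (n : ℕ) :
    ∫ x, x ^ (2 * n) ∂(gaussianReal 0 1) = (2 * n - 1)‼ := by
  have hGamma : ∫ x in Set.Ioi (0 : ℝ), x ^ (2 * n) * Real.exp (-(1 / 2) * x ^ 2) =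
      (1 / 2 : ℝ) ^ (-(n + 1 / 2) : ℝ) * (1 / 2) * Real.Gamma (n + 1 / 2) := by
    have h := integral_rpow_mul_exp_neg_mul_rpow (p := 2) (q := (2 * n : ℕ)) (b := 1 / 2)
      two_pos (by linarith [(2 * n : ℕ).cast_nonneg (α := ℝ)]) (by norm_num)
    simp only [Real.rpow_natCast, Real.rpow_two] at h
    rw [h]
    push_cast
    ring_nf
  have hpow : (1 / 2 : ℝ) ^ (-(n + 1 / 2) : ℝ) = 2 ^ n * √2 := by
    rw [one_div, Real.inv_rpow two_pos.le, ← Real.rpow_neg two_pos.le, neg_neg,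
      Real.rpow_add two_pos, Real.rpow_natCast, Real.sqrt_eq_rpow, one_div]
  have hdensity (x : ℝ) : gaussianPDFReal 0 1 x • x ^ (2 * n) =
      (√(2 * Real.pi))⁻¹ * (|x| ^ (2 * n) * Real.exp (-(1 / 2) * |x| ^ 2)) := by
    rw [Even.pow_abs (even_two_mul n), sq_abs, gaussianPDFReal, smul_eq_mul]
    simp only [NNReal.coe_one, mul_one, sub_zero]
    ring_nf
  rw [integral_gaussianReal_eq_integral_smul one_ne_zero]
  simp_rw [hdensity]
  rw [integral_const_mul,
    integral_comp_abs (f := fun x => x ^ (2 * n) * Real.exp (-(1 / 2) * x ^ 2)),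
    hGamma, hpow, Real.Gamma_nat_add_half, Real.sqrt_mul two_pos.le]
  field_simp

lemma integrable_pow_gaussianReal (m : ℝ) (v : NNReal) (n : ℕ) :
    Integrable (fun x => x ^ n) (gaussianReal m v) := by
  rcases eq_or_ne n 0 with rfl | hn
  · simp
  refine (integrable_norm_iff (by fun_prop)).1 ?_
  simpa only [id, norm_pow, NNReal.coe_natCast, ENNReal.coe_natCast] using
    (memLp_id_gaussianReal (μ := m) (v := v) n).integrable_norm_pow hn

lemma integral_sq_sub_one_gaussianReal : ∫ x, (x ^ 2 - 1) ∂(gaussianReal 0 1) = 0 := by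
  rw [integral_sub (integrable_pow_gaussianReal 0 1 2) (integrable_const _)]
  simp [integral_pow_two_mul_gaussianReal 1]

lemma variance_sq_sub_one_gaussianReal : Var[fun x => x ^ 2 - 1; gaussianReal 0 1] = 2 := by
  have h2 := integrable_pow_gaussianReal 0 1 2
  have h4 := integrable_pow_gaussianReal 0 1 4
  have hsq : ∫ x, x ^ 2 ∂(gaussianReal 0 1) = 1 := by
    simpa using integral_pow_two_mul_gaussianReal 1
  have hpow_four : ∫ x, x ^ 4 ∂(gaussianReal 0 1) = 3 := by
    simpa [Nat.doubleFactorial] using integral_pow_two_mul_gaussianReal 2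
  have hexpand (x : ℝ) : (x ^ 2 - 1) ^ 2 = x ^ 4 - 2 * x ^ 2 + 1 := by ring
  rw [variance_of_integral_eq_zero (by fun_prop) integral_sq_sub_one_gaussianReal]
  simp_rw [hexpand]
  rw [integral_add (f := fun x => x ^ 4 - 2 * x ^ 2) (h4.sub (h2.const_mul 2))
    (integrable_const _), integral_sub h4 (h2.const_mul 2), integral_const_mul, hpow_four, hsq]
  norm_num

lemma gaussianPDFReal_smul_exp_mul_sq (a x : ℝ) :
    gaussianPDFReal 0 1 x • Real.exp (a * x ^ 2) =
      (√(2 * Real.pi))⁻¹ * Real.exp (-(1 / 2 - a) * x ^ 2) := by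
  simp only [gaussianPDFReal, NNReal.coe_one, mul_one, sub_zero, smul_eq_mul]
  rw [mul_assoc, ← Real.exp_add]
  ring_nf

lemma integrable_exp_mul_sq_gaussianReal {a : ℝ} (ha : a < 1 / 2) :
    Integrable (fun x => Real.exp (a * x ^ 2)) (gaussianReal 0 1) := by
  rw [gaussianReal_of_var_ne_zero _ one_ne_zero,
    integrable_withDensity_iff_integrable_smul' (measurable_gaussianPDF 0 1)
    (.of_forall fun _ => gaussianPDF_lt_top)]
  simp only [toReal_gaussianPDF, gaussianPDFReal_smul_exp_mul_sq]
  exact (integrable_exp_neg_mul_sq (by linarith)).const_mul _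

lemma integral_exp_mul_sq_gaussianReal {a : ℝ} (ha : a < 1 / 2) :
    ∫ x, Real.exp (a * x ^ 2) ∂(gaussianReal 0 1) = (√(1 - 2 * a))⁻¹ := by
  have ha1 : 1 - 2 * a ≠ 0 := by linarith
  rw [integral_gaussianReal_eq_integral_smul one_ne_zero]
  simp_rw [gaussianPDFReal_smul_exp_mul_sq]
  rw [integral_const_mul, integral_gaussian, ← Real.sqrt_inv, ← Real.sqrt_mul (by positivity),
    ← Real.sqrt_inv]
  congr 1
  field_simp

lemma exp_neg_sub_sq_le_one_sub {u : ℝ} (hu : u ≤ 1 / 2) : Real.exp (-u - u ^ 2) ≤ 1 - u := by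
  suffices 1 ≤ (1 - u) * Real.exp (u + u ^ 2) by
    rwa [show -u - u ^ 2 = -(u + u ^ 2) by ring, Real.exp_neg,
      inv_le_iff_one_le_mul₀ (Real.exp_pos _)]
  rcases le_total 0 u with hu0 | hu0
  · calc 1 ≤ (1 - u) * (1 + (u + u ^ 2) + (u + u ^ 2) ^ 2 / 2) := by
          have h : 0 ≤ (1 - u) * (1 + u) ^ 2 / 2 - u := by
            nlinarith [mul_nonneg hu0 (sub_nonneg.2 hu),
              mul_nonneg hu0 (mul_nonneg hu0 (sub_nonneg.2 hu))]
          nlinarith [mul_nonneg (sq_nonneg u) h]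
      _ ≤ (1 - u) * Real.exp (u + u ^ 2) := by
          gcongr
          · linarith
          · exact Real.quadratic_le_exp_of_nonneg (by positivity)
  · calc 1 ≤ (1 - u) * (u + u ^ 2 + 1) := by
          nlinarith [mul_nonneg (neg_nonneg.2 hu0) (sq_nonneg u)]
      _ ≤ (1 - u) * Real.exp (u + u ^ 2) := by
          gcongr
          · linarith
          · exact Real.add_one_le_exp _

lemma hasSubexponentialMGF_sq_sub_one_gaussianReal :
    HasSubexponentialMGF (fun x => x ^ 2 - 1) 2 4 (gaussianReal 0 1) := by
  have hsplit (t x : ℝ) : Real.exp (t * (x ^ 2 - 1)) = Real.exp (-t) * Real.exp (t * x ^ 2) := by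
    rw [← Real.exp_add]; ring_nf
  have hlt {t : ℝ} (ht : |t| * 4 ≤ 1) : t < 1 / 2 := by linarith [le_abs_self t]
  refine ⟨fun t ht => ?_, fun t ht => ?_⟩
  · simp_rw [hsplit]
    exact (integrable_exp_mul_sq_gaussianReal (hlt ht)).const_mul _
  have hsqrt : Real.exp (-t - 2 * t ^ 2) ≤ √(1 - 2 * t) := by
    have hexp := exp_neg_sub_sq_le_one_sub (u := 2 * t) (by linarith [le_abs_self t])
    refine Real.le_sqrt_of_sq_le ((le_of_eq ?_).trans hexp)
    rw [← Real.exp_nat_mul]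
    push_cast
    ring_nf
  simp_rw [mgf, hsplit]
  rw [integral_const_mul, integral_exp_mul_sq_gaussianReal (hlt ht), ← div_eq_mul_inv,
    div_le_iff₀ (Real.sqrt_pos.2 (by linarith [hlt ht]))]
  calc Real.exp (-t) = Real.exp (2 * t ^ 2) * Real.exp (-t - 2 * t ^ 2) := by
        rw [← Real.exp_add]; ring_nf
    _ ≤ Real.exp (2 * t ^ 2) * √(1 - 2 * t) := by gcongr

end StandardGaussian

section CenteredChiSq

variable {ι : Type*} [Fintype ι]

instance isGaussian_pi {E : ι → Type*} [∀ i, NormedAddCommGroup (E i)] [∀ i, NormedSpace ℝ (E i)]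
    [∀ i, MeasurableSpace (E i)] [∀ i, BorelSpace (E i)] [∀ i, SecondCountableTopology (E i)]
    [∀ i, CompleteSpace (E i)] (μ : ∀ i, Measure (E i)) [∀ i, IsGaussian (μ i)] :
    IsGaussian (Measure.pi μ) := by
  have hlaw : HasGaussianLaw (fun x i => x i) (Measure.pi μ) := by
    refine iIndepFun.hasGaussianLaw (X := fun i (x : ∀ i, E i) => x i) (fun i => ⟨?_⟩)
      (iIndepFun_pi (X := fun _ => id) fun _ => aemeasurable_id)
    rw [(measurePreserving_eval μ i).map_eq]
    infer_instance
  simpa using hlaw.isGaussian_map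

/-- The standard Gaussian measure on `ι → ℝ`, as a product measure. -/
noncomputable abbrev stdGaussianPi (ι : Type*) [Fintype ι] : Measure (ι → ℝ) :=
  Measure.pi fun _ => gaussianReal 0 1

lemma integral_id_stdGaussianPi : (stdGaussianPi ι)[id] = 0 := by
  ext i
  have hint : Integrable (id : (ι → ℝ) → ι → ℝ) (stdGaussianPi ι) := IsGaussian.integrable_id
  rw [eval_integral (fun i => hint.eval i)]
  exact (integral_comp_eval (μ := fun _ : ι => gaussianReal 0 1) (f := fun x : ℝ => x)
    (by fun_prop)).trans integral_id_gaussianReal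

/-- The centred weighted chi-square form `∑ i, w i (x i ² - 1)`, the random variable whose
deviations are studied under `stdGaussianPi ι`. -/
noncomputable def centeredChiSq (w x : ι → ℝ) : ℝ := ∑ i, w i * (x i ^ 2 - 1)

lemma centeredChiSq_neg (w x : ι → ℝ) : centeredChiSq (-w) x = -centeredChiSq w x := by
  simp [centeredChiSq]

@[fun_prop]
lemma measurable_centeredChiSq (w : ι → ℝ) : Measurable (centeredChiSq w) := by
  unfold centeredChiSq; fun_prop

lemma centeredChiSq_eq_sum (w : ι → ℝ) :
    centeredChiSq w = ∑ i, fun x : ι → ℝ => w i * (x i ^ 2 - 1) := by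
  ext x; simp [centeredChiSq]

lemma hasSubexponentialMGF_centeredChiSq (w : ι → ℝ) :
    HasSubexponentialMGF (centeredChiSq w) (2 * ∑ i, w i ^ 2) (4 * ‖w‖) (stdGaussianPi ι) := by
  rw [centeredChiSq_eq_sum, Finset.mul_sum]
  refine HasSubexponentialMGF.sum_of_iIndepFun
    (iIndepFun_pi (X := fun i x => w i * (x ^ 2 - 1)) fun i => by fun_prop)
    (fun i => by fun_prop) _ fun i _ => ?_
  have hscale : |w i| * 4 ≤ 4 * ‖w‖ := by linarith [norm_le_pi_norm w i, Real.norm_eq_abs (w i)]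
  exact ((hasSubexponentialMGF_sq_sub_one_gaussianReal.const_mul (w i)).mono_scale
    hscale).comp_measurePreserving (by fun_prop) (measurePreserving_eval _ i)

lemma memLp_centeredChiSq (w : ι → ℝ) (p : NNReal) : MemLp (centeredChiSq w) p (stdGaussianPi ι) :=
  (hasSubexponentialMGF_centeredChiSq w).memLp p

lemma integral_centeredChiSq (w : ι → ℝ) : ∫ x, centeredChiSq w x ∂(stdGaussianPi ι) = 0 := by
  have hint (i : ι) : Integrable (fun x : ι → ℝ => w i * (x i ^ 2 - 1)) (stdGaussianPi ι) :=
    integrable_comp_eval (μ := fun _ : ι => gaussianReal 0 1) (f := fun x => w i * (x ^ 2 - 1))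
      (((integrable_pow_gaussianReal 0 1 2).sub (integrable_const 1)).const_mul _)
  simp only [centeredChiSq]
  rw [integral_finsetSum _ fun i _ => hint i]
  refine Finset.sum_eq_zero fun i _ => ?_
  rw [integral_const_mul, integral_comp_eval (μ := fun _ : ι => gaussianReal 0 1)
    (f := fun x => x ^ 2 - 1) (by fun_prop), integral_sq_sub_one_gaussianReal, mul_zero]

lemma variance_centeredChiSq (w : ι → ℝ) :
    Var[centeredChiSq w; stdGaussianPi ι] = 2 * ∑ i, w i ^ 2 := by
  have hLp : MemLp (fun x : ℝ => x ^ 2 - 1) 2 (gaussianReal 0 1) :=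
    hasSubexponentialMGF_sq_sub_one_gaussianReal.memLp 2
  rw [centeredChiSq_eq_sum, variance_sum_pi (X := fun i x => w i * (x ^ 2 - 1))
    fun i => hLp.const_mul _, Finset.mul_sum]
  refine Finset.sum_congr rfl fun i _ => ?_
  rw [variance_const_mul, variance_sq_sub_one_gaussianReal, mul_comm]

lemma integral_sq_centeredChiSq (w : ι → ℝ) :
    ∫ x, centeredChiSq w x ^ 2 ∂(stdGaussianPi ι) = 2 * ∑ i, w i ^ 2 := by
  rw [← variance_of_integral_eq_zero (by fun_prop) (integral_centeredChiSq w),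
    variance_centeredChiSq]

lemma sum_sq_pos {w : ι → ℝ} (hw : w ≠ 0) : 0 < ∑ i, w i ^ 2 := by
  obtain ⟨i, hi⟩ := Function.ne_iff.1 hw
  exact Finset.sum_pos' (fun i _ => sq_nonneg _) ⟨i, Finset.mem_univ i, sq_pos_iff.2 hi⟩

lemma norm_le_sqrt_sum_sq (w : ι → ℝ) : ‖w‖ ≤ √(∑ i, w i ^ 2) :=
  (pi_norm_le_iff_of_nonneg (Real.sqrt_nonneg _)).2 fun i => Real.abs_le_sqrt <|
    Finset.single_le_sum (f := fun i => w i ^ 2) (fun _ _ => sq_nonneg _) (Finset.mem_univ i)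

lemma integral_pow_four_centeredChiSq_le {w : ι → ℝ} (hw : w ≠ 0) :
    ∫ x, centeredChiSq w x ^ 4 ∂(stdGaussianPi ι) ≤ 96 * (16 * ∑ i, w i ^ 2) ^ 2 := by
  set Q := ∑ i, w i ^ 2 with hQ
  have hQpos : 0 < Q := sum_sq_pos hw
  have hscale : |(4 * √Q)⁻¹| * (4 * ‖w‖) ≤ 1 := by
    rw [abs_of_nonneg (by positivity), inv_mul_le_one₀ (by positivity)]
    gcongr
    exact norm_le_sqrt_sum_sq w
  have hsq : (4 * √Q)⁻¹ ^ 2 = (16 * Q)⁻¹ := by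
    rw [inv_pow, mul_pow, Real.sq_sqrt hQpos.le]; norm_num
  have hexp : Real.exp (2 * Q * (16 * Q)⁻¹) ≤ 2 := by
    rw [show 2 * Q * (16 * Q)⁻¹ = 1 / 8 by field_simp; norm_num, ← Real.le_log_iff_exp_le two_pos]
    linarith [Real.log_two_gt_d9]
  have hfour := (hasSubexponentialMGF_centeredChiSq w).pow_four_mul_integral_pow_four_le hscale
  rw [← hQ, show (4 * √Q)⁻¹ ^ 4 = ((4 * √Q)⁻¹ ^ 2) ^ 2 by ring, hsq, inv_pow,
    inv_mul_le_iff₀ (by positivity)] at hfour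
  nlinarith [sq_nonneg (16 * Q)]

lemma le_measureReal_centeredChiSq_pos {w : ι → ℝ} (hw : w ≠ 0) :
    1 / 49152 ≤ (stdGaussianPi ι).real {x | 0 < centeredChiSq w x} := by
  have hQpos := sum_sq_pos hw
  have hmoments := sq_integral_sq_le_integral_pow_four_mul_measureReal_pos
    (memLp_centeredChiSq w 4) (integral_centeredChiSq w)
  rw [integral_sq_centeredChiSq] at hmoments
  set p := (stdGaussianPi ι).real {x | 0 < centeredChiSq w x}
  have hfour : 8 * (∫ x, centeredChiSq w x ^ 4 ∂(stdGaussianPi ι)) * p ≤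
      8 * (96 * (16 * ∑ i, w i ^ 2) ^ 2) * p := by
    gcongr
    exact integral_pow_four_centeredChiSq_le hw
  have hQsq : 0 < (2 * ∑ i, w i ^ 2) ^ 2 := by positivity
  refine le_of_mul_le_mul_left ?_ hQsq
  linarith

lemma le_measureReal_centeredChiSq_neg {w : ι → ℝ} (hw : w ≠ 0) :
    1 / 49152 ≤ (stdGaussianPi ι).real {x | centeredChiSq w x < 0} := by
  simpa [centeredChiSq_neg] using le_measureReal_centeredChiSq_pos (neg_ne_zero.2 hw)

lemma measureReal_le_abs_centeredChiSq_le {w : ι → ℝ} {R : ℝ} (hR : 0 < R) :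
    (stdGaussianPi ι).real {x | R ≤ |centeredChiSq w x|} ≤ 2 * (∑ i, w i ^ 2) / R ^ 2 := by
  have hcheb := meas_ge_le_variance_div_sq (memLp_centeredChiSq w 2) hR
  simp only [integral_centeredChiSq, variance_centeredChiSq, sub_zero] at hcheb
  exact ENNReal.toReal_le_of_le_ofReal (by positivity) hcheb

lemma centeredChiSq_rotate (w : ι → ℝ) (p : (ι → ℝ) × (ι → ℝ)) (θ : ℝ) :
    centeredChiSq w (rotate θ p) =
      (centeredChiSq w p.1 + centeredChiSq w p.2) / 2
        + (centeredChiSq w p.1 - centeredChiSq w p.2) / 2 * Real.cos (2 * θ)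
        + (∑ i, w i * (p.1 i * p.2 i)) * Real.sin (2 * θ) := by
  have hquad : centeredChiSq w (rotate θ p) =
      Real.cos θ ^ 2 * centeredChiSq w p.1 + Real.sin θ ^ 2 * centeredChiSq w p.2
        + (∑ i, w i * (p.1 i * p.2 i)) * (2 * Real.sin θ * Real.cos θ) := by
    simp only [centeredChiSq, rotate, Finset.mul_sum, Finset.sum_mul, ← Finset.sum_add_distrib,
      Pi.add_apply, Pi.smul_apply, smul_eq_mul]
    refine Finset.sum_congr rfl fun i _ => ?_
    linear_combination w i * Real.sin_sq_add_cos_sq θ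
  rw [hquad, Real.sin_two_mul, Real.cos_two_mul, Real.sin_sq]
  ring

lemma lipschitzWith_trig_polynomial (a b c : ℝ) :
    LipschitzWith (2 * (‖b‖₊ + ‖c‖₊))
      fun θ => a + b * Real.cos (2 * θ) + c * Real.sin (2 * θ) := by
  refine LipschitzWith.of_dist_le_mul fun θ φ => ?_
  have hdouble : |2 * θ - 2 * φ| = 2 * |θ - φ| := by rw [← mul_sub, abs_mul, abs_two]
  have hcos := (Real.abs_cos_sub_cos_le (2 * θ) (2 * φ)).trans_eq hdouble
  have hsin := (Real.abs_sin_sub_sin_le (2 * θ) (2 * φ)).trans_eq hdouble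
  simp only [Real.dist_eq, NNReal.coe_mul, NNReal.coe_add, NNReal.coe_ofNat, coe_nnnorm,
    Real.norm_eq_abs]
  calc |a + b * Real.cos (2 * θ) + c * Real.sin (2 * θ)
        - (a + b * Real.cos (2 * φ) + c * Real.sin (2 * φ))|
      = |b * (Real.cos (2 * θ) - Real.cos (2 * φ))
          + c * (Real.sin (2 * θ) - Real.sin (2 * φ))| := by ring_nf
    _ ≤ |b| * |Real.cos (2 * θ) - Real.cos (2 * φ)|
          + |c| * |Real.sin (2 * θ) - Real.sin (2 * φ)| := by
        rw [← abs_mul, ← abs_mul]; exact abs_add_le _ _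
    _ ≤ |b| * (2 * |θ - φ|) + |c| * (2 * |θ - φ|) := by gcongr
    _ = 2 * (|b| + |c|) * |θ - φ| := by ring

-- The values at the angles `0`, `π / 2` and `π / 4` determine the coefficients of the
-- trigonometric polynomial.
lemma lipschitzWith_centeredChiSq_rotate {w : ι → ℝ} {p : (ι → ℝ) × (ι → ℝ)} {R : NNReal}
    (hfst : |centeredChiSq w p.1| ≤ R) (hsnd : |centeredChiSq w p.2| ≤ R)
    (hmid : |centeredChiSq w (rotate (Real.pi / 4) p)| ≤ R) :
    LipschitzWith (6 * R) fun θ => centeredChiSq w (rotate θ p) := by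
  rw [centeredChiSq_rotate, show 2 * (Real.pi / 4) = Real.pi / 2 by ring, Real.cos_pi_div_two,
    Real.sin_pi_div_two] at hmid
  simp only [centeredChiSq_rotate]
  refine (lipschitzWith_trig_polynomial _ _ _).weaken ?_
  rw [← NNReal.coe_le_coe]
  push_cast
  simp only [Real.norm_eq_abs]
  rw [abs_le] at hfst hsnd hmid
  have hcos : |(centeredChiSq w p.1 - centeredChiSq w p.2) / 2| ≤ R :=
    abs_le.2 ⟨by linarith, by linarith⟩
  have hsin : |∑ i, w i * (p.1 i * p.2 i)| ≤ 2 * R := abs_le.2 ⟨by linarith, by linarith⟩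
  linarith

lemma measureReal_le_abs_centeredChiSq_rotate_le (w : ι → ℝ) {R : ℝ} (hR : 0 < R) (θ : ℝ) :
    ((stdGaussianPi ι).prod (stdGaussianPi ι)).real {p | R ≤ |centeredChiSq w (rotate θ p)|} ≤
      2 * (∑ i, w i ^ 2) / R ^ 2 :=
  ((measurePreserving_rotate integral_id_stdGaussianPi θ).measureReal_preimage
    (measurableSet_le measurable_const (measurable_centeredChiSq w).abs).nullMeasurableSet).trans_le
    (measureReal_le_abs_centeredChiSq_le hR)

-- `R` is so large that by Chebyshev's inequality `|S| ≥ R` has probability at most `2⁻³⁵` at each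
-- of the angles `0`, `π / 4`, `π / 2`.
lemma le_measureReal_sign_change_lipschitzWith_rotate {w : ι → ℝ} (hw : w ≠ 0) {R : NNReal}
    (hR : 2 ^ 36 * ∑ i, w i ^ 2 ≤ R ^ 2) :
    1 / 2 ^ 32 ≤ ((stdGaussianPi ι).prod (stdGaussianPi ι)).real
      {p | centeredChiSq w p.1 ≤ 0 ∧ 0 ≤ centeredChiSq w p.2 ∧
        LipschitzWith (6 * R) fun θ => centeredChiSq w (rotate θ p)} := by
  set μ := stdGaussianPi ι
  have hR_pos : (0 : ℝ) < R := by
    have hsq : (0 : ℝ) < R ^ 2 := (mul_pos (by positivity) (sum_sq_pos hw)).trans_le hR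
    exact R.coe_nonneg.lt_of_ne' (pow_ne_zero_iff two_ne_zero |>.1 hsq.ne')
  set far : ℝ → Set ((ι → ℝ) × (ι → ℝ)) := fun θ => {p | R ≤ |centeredChiSq w (rotate θ p)|}
    with hfar
  have hfar_le (θ : ℝ) : (μ.prod μ).real (far θ) ≤ 1 / 2 ^ 35 := by
    refine (measureReal_le_abs_centeredChiSq_rotate_le w hR_pos θ).trans ?_
    rw [div_le_div_iff₀ (by positivity) (by positivity)]
    linarith
  set bad := far 0 ∪ far (Real.pi / 4) ∪ far (Real.pi / 2) with hbad
  have hbad_le : (μ.prod μ).real bad ≤ 1 / 2 ^ 35 + 1 / 2 ^ 35 + 1 / 2 ^ 35 :=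
    (measureReal_union_le _ _).trans <| add_le_add
      ((measureReal_union_le _ _).trans <| add_le_add (hfar_le _) (hfar_le _)) (hfar_le _)
  set signs := {x | centeredChiSq w x < 0} ×ˢ {x | 0 < centeredChiSq w x}
  have hsigns : 1 / 49152 * (1 / 49152) ≤ (μ.prod μ).real signs := by
    rw [measureReal_prod_prod]
    gcongr
    exacts [le_measureReal_centeredChiSq_neg hw, le_measureReal_centeredChiSq_pos hw]
  calc 1 / 2 ^ 32 ≤ (μ.prod μ).real signs - (μ.prod μ).real bad := by
        norm_num at hsigns hbad_le ⊢; linarith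
    _ ≤ (μ.prod μ).real (signs \ bad) := le_measureReal_sdiff
    _ ≤ _ := by
        refine measureReal_mono fun p ⟨⟨hneg, hpos⟩, hgood⟩ => ⟨le_of_lt hneg, le_of_lt hpos, ?_⟩
        simp only [hbad, hfar, Set.mem_union, Set.mem_ofPred_eq, rotate_zero, rotate_pi_div_two,
          not_or, not_le] at hgood
        exact lipschitzWith_centeredChiSq_rotate hgood.1.1.le hgood.2.le hgood.1.2.le

lemma le_measureReal_abs_centeredChiSq_le {w : ι → ℝ} (hw : w ≠ 0) {η : ℝ} (hη0 : 0 ≤ η)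
    (hη1 : η ≤ 1) :
    η / 2 ^ 34 ≤
      (stdGaussianPi ι).real {x | |centeredChiSq w x| ≤ 2 ^ 21 * √(∑ i, w i ^ 2) * η} := by
  set Q := ∑ i, w i ^ 2 with hQ
  have hQpos : 0 < Q := sum_sq_pos hw
  set R : NNReal := ⟨2 ^ 18 * √Q, by positivity⟩
  have hR_coe : (R : ℝ) = 2 ^ 18 * √Q := rfl
  have hgood := le_measureReal_sign_change_lipschitzWith_rotate hw (R := R) (by
    rw [hR_coe, mul_pow, Real.sq_sqrt hQpos.le, ← hQ]; norm_num)
  have hcross := mul_measureReal_le_measureReal_abs_le_of_rotate integral_id_stdGaussianPi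
    (measurable_centeredChiSq w) (fun p hp => hp) hη0 (Λ := 6 * R)
  have hmono : (stdGaussianPi ι).real {x | |centeredChiSq w x| ≤ (6 * R : NNReal) * η} ≤
      (stdGaussianPi ι).real {x | |centeredChiSq w x| ≤ 2 ^ 21 * √Q * η} := by
    refine measureReal_mono fun x hx => le_trans (Set.mem_ofPred_eq ▸ hx) ?_
    rw [NNReal.coe_mul, hR_coe]
    gcongr ?_ * η
    push_cast
    linarith [Real.sqrt_nonneg Q]
  have hangle : Real.pi / 2 + η ≤ 4 := by linarith [Real.pi_le_four]
  have hbound := (mul_le_mul_of_nonneg_left hgood hη0).trans <| hcross.trans <|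
    mul_le_mul hangle hmono measureReal_nonneg zero_le_four
  linarith

lemma le_measureReal_abs_centeredChiSq_le_of_le {w : ι → ℝ} (hw : w ≠ 0) {L : ℝ} (hL0 : 0 ≤ L)
    (hL1 : L ≤ 1 / 2 ^ 34) :
    1 - Real.exp (-L) ≤
      (stdGaussianPi ι).real {x | |centeredChiSq w x| ≤ 2 ^ 55 * (√(∑ i, w i ^ 2) * √L)} := by
  have hball := le_measureReal_abs_centeredChiSq_le hw (η := 2 ^ 34 * L) (by positivity)
    (by linarith)
  have hsqrt : L ≤ √L := Real.le_sqrt_of_sq_le (by nlinarith)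
  calc 1 - Real.exp (-L) ≤ 2 ^ 34 * L / 2 ^ 34 := by
        linarith [Real.one_sub_le_exp_neg L]
    _ ≤ _ := hball.trans <| measureReal_mono fun x (hx : |centeredChiSq w x| ≤ _) => hx.trans ?_
  calc 2 ^ 21 * √(∑ i, w i ^ 2) * (2 ^ 34 * L) = 2 ^ 55 * (√(∑ i, w i ^ 2) * L) := by ring
    _ ≤ 2 ^ 55 * (√(∑ i, w i ^ 2) * √L) := by gcongr

-- The factor `2` of the two-sided tail bound is absorbed by replacing `L` with `2 ^ 35 * L`.
lemma le_measureReal_abs_centeredChiSq_le_of_ge {w : ι → ℝ} (hw : w ≠ 0) {L : ℝ}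
    (hL : 1 / 2 ^ 34 ≤ L) :
    1 - Real.exp (-L) ≤ (stdGaussianPi ι).real
      {x | |centeredChiSq w x| ≤ 2 ^ 55 * (√(∑ i, w i ^ 2) * √L + ‖w‖ * L)} := by
  set u := 2 ^ 55 * (√(∑ i, w i ^ 2) * √L + ‖w‖ * L)
  have hL0 : 0 ≤ L := le_trans (by positivity) hL
  have htail := (hasSubexponentialMGF_centeredChiSq w).measureReal_abs_ge_le
    (mul_pos two_pos (sum_sq_pos hw)) (by positivity) (L := 2 ^ 35 * L)
    (mul_nonneg (by positivity) hL0)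
  have hthreshold :
      2 * (√((2 * ∑ i, w i ^ 2) * (2 ^ 35 * L)) + 4 * ‖w‖ * (2 ^ 35 * L)) ≤ u := by
    have hsqrt : √((2 * ∑ i, w i ^ 2) * (2 ^ 35 * L)) = 2 ^ 18 * (√(∑ i, w i ^ 2) * √L) := by
      rw [show (2 * ∑ i, w i ^ 2) * (2 ^ 35 * L) = (2 ^ 18) ^ 2 * ((∑ i, w i ^ 2) * L) by ring,
        Real.sqrt_mul (by positivity), Real.sqrt_sq (by positivity),
        Real.sqrt_mul (sum_sq_pos hw).le]
    have hgauss : 0 ≤ √(∑ i, w i ^ 2) * √L := by positivity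
    have hexp : 0 ≤ ‖w‖ * L := by positivity
    rw [hsqrt]
    linarith
  have hexp : 2 * Real.exp (-(2 ^ 35 * L)) ≤ Real.exp (-L) := by
    calc 2 * Real.exp (-(2 ^ 35 * L)) = Real.exp (Real.log 2 + -(2 ^ 35 * L)) := by
          rw [Real.exp_add, Real.exp_log two_pos]
      _ ≤ Real.exp (-L) := by
          gcongr
          linarith [Real.log_two_lt_d9]
  have hcompl : (stdGaussianPi ι).real {x | |centeredChiSq w x| ≤ u}ᶜ ≤ Real.exp (-L) :=
    (measureReal_mono fun x hx => hthreshold.trans (not_le.1 hx).le).trans (htail.trans hexp)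
  rw [probReal_compl_eq_one_sub (measurableSet_le (by fun_prop) measurable_const)] at hcompl
  linarith

theorem one_sub_exp_neg_le_measureReal_abs_centeredChiSq_le (w : ι → ℝ) {L : ℝ} (hL : 0 ≤ L) :
    1 - Real.exp (-L) ≤ (stdGaussianPi ι).real
      {x | |centeredChiSq w x| ≤ 2 ^ 55 * (√(∑ i, w i ^ 2) * √L + ‖w‖ * L)} := by
  rcases eq_or_ne w 0 with rfl | hw
  · simp [centeredChiSq, Real.exp_nonneg]
  rcases le_total L (1 / 2 ^ 34) with hsmall | hlarge
  · refine (le_measureReal_abs_centeredChiSq_le_of_le hw hL hsmall).trans <|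
      measureReal_mono fun x (hx : |centeredChiSq w x| ≤ _) => hx.trans ?_
    gcongr
    exact le_add_of_nonneg_right (by positivity)
  · exact le_measureReal_abs_centeredChiSq_le_of_ge hw hlarge

end CenteredChiSq

section Transfer

lemma lpNorm_four_sq {k : ℕ} (v : Fin k → ℝ) : _root_.lpNorm 4 v ^ 2 = √(∑ i, v i ^ 4) := by
  have hpow (i : Fin k) : |v i| ^ (4 : ℝ) = v i ^ 4 := by
    rw [show (4 : ℝ) = (4 : ℕ) by norm_num, Real.rpow_natCast, Even.pow_abs (by decide)]
  have hsum : 0 ≤ ∑ i, v i ^ 4 := Finset.sum_nonneg fun i _ => by positivity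
  simp only [_root_.lpNorm, hpow]
  rw [← Real.rpow_natCast, ← Real.rpow_mul hsum, Real.sqrt_eq_rpow]
  norm_num

lemma abs_le_supNorm {k : ℕ} (v : Fin k → ℝ) (i : Fin k) : |v i| ≤ supNorm v :=
  le_ciSup (Set.finite_range fun i => |v i|).bddAbove i

lemma iidGaussVec_eq_map_stdGaussianPi (N k : ℕ) (σ2 : NNReal) :
    iidGaussVec N k σ2 =
      (stdGaussianPi (Fin N × Fin k)).map fun x i j => √σ2 * x (i, j) := by
  have hscale : gaussianReal 0 σ2 = (gaussianReal 0 1).map (√σ2 * ·) := by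
    rw [gaussianReal_map_const_mul, mul_zero, mul_one]
    congr 1
    ext
    exact (Real.sq_sqrt σ2.coe_nonneg).symm
  have hpi : Measure.pi (fun _ : Fin N × Fin k => gaussianReal 0 σ2) =
      (stdGaussianPi (Fin N × Fin k)).map fun x p => √σ2 * x p := by
    rw [Measure.pi_map_pi (f := fun _ x => √σ2 * x) (fun _ => by fun_prop)]
    simp only [hscale]
  have hcurry := Measure.infinitePi_map_curry fun (_ : Fin N) (_ : Fin k) => gaussianReal 0 σ2
  simp only [Measure.infinitePi_eq_pi] at hcurry
  unfold iidGaussVec gaussVec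
  rw [← hcurry, hpi, Measure.map_map (MeasurableEquiv.measurable _) (by fun_prop)]
  rfl

lemma sum_sq_norm_sub_mul_eq_centeredChiSq {N k : ℕ} (σ2 : NNReal) (v : Fin N → ℝ)
    (x : Fin N × Fin k → ℝ) :
    ∑ i, ((∑ j, (√σ2 * x (i, j)) ^ 2) - k * σ2) * v i ^ 2 =
      centeredChiSq (fun p => σ2 * v p.1 ^ 2) x := by
  rw [centeredChiSq, Fintype.sum_prod_type]
  refine Finset.sum_congr rfl fun i _ => ?_
  simp only [mul_pow, Real.sq_sqrt σ2.coe_nonneg, ← Finset.mul_sum, Finset.sum_sub_distrib,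
    Finset.sum_const, Finset.card_univ, Fintype.card_fin, nsmul_eq_mul, mul_one]
  ring

lemma sqrt_sum_sq_replicate_mul_sq {N : ℕ} (k : ℕ) (σ2 : NNReal) (v : Fin N → ℝ) :
    √(∑ p : Fin N × Fin k, (σ2 * v p.1 ^ 2) ^ 2) = σ2 * √k * _root_.lpNorm 4 v ^ 2 := by
  have hsum : ∑ p : Fin N × Fin k, (σ2 * v p.1 ^ 2) ^ 2 = (σ2 : ℝ) ^ 2 * (k * ∑ i, v i ^ 4) := by
    simp only [Fintype.sum_prod_type, Finset.sum_const, Finset.card_univ, Fintype.card_fin,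
      nsmul_eq_mul, Finset.mul_sum]
    exact Finset.sum_congr rfl fun i _ => by ring
  rw [hsum, Real.sqrt_mul (by positivity), Real.sqrt_sq σ2.coe_nonneg,
    Real.sqrt_mul k.cast_nonneg, lpNorm_four_sq, mul_assoc]

lemma norm_replicate_mul_sq_le {N : ℕ} (k : ℕ) (σ2 : NNReal) (v : Fin N → ℝ) :
    ‖fun p : Fin N × Fin k => σ2 * v p.1 ^ 2‖ ≤ σ2 * supNorm v ^ 2 := by
  refine (pi_norm_le_iff_of_nonneg (by positivity)).2 fun p => ?_
  rw [Real.norm_eq_abs, abs_mul, abs_pow, NNReal.abs_eq]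
  gcongr
  exact abs_le_supNorm v p.1

lemma deviation_le_subset_deviation_le {N n : ℕ} (hn : 1 ≤ n) (v : Fin N → ℝ) {C L : ℝ}
    (hC : 0 ≤ C) (hL : 0 ≤ L) :
    {B : Fin N → Fin (n - 1) → ℝ |
        |∑ i, ((∑ j, B i j ^ 2) - (n - 1 : ℕ) * ((N : NNReal)⁻¹ : NNReal)) * v i ^ 2| ≤
          C * (((N : NNReal)⁻¹ : NNReal) * √((n - 1 : ℕ) * L) * _root_.lpNorm 4 v ^ 2
            + ((N : NNReal)⁻¹ : NNReal) * L * supNorm v ^ 2)} ⊆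
      {B | |∑ i, ((∑ j, B i j ^ 2) - ((n : ℝ) - 1) / N) * v i ^ 2| ≤
          C * (√(n * L) / N * _root_.lpNorm 4 v ^ 2 + √n * L / N * supNorm v ^ 2)} := by
  intro B hB
  simp only [Set.mem_ofPred_eq, NNReal.coe_inv, NNReal.coe_natCast, ← div_eq_mul_inv,
    inv_mul_eq_div, Nat.cast_pred hn] at hB ⊢
  have hsqrt : 1 ≤ √(n : ℝ) := Real.one_le_sqrt.2 (by exact_mod_cast hn)
  refine hB.trans ?_
  gcongr
  · exact sub_le_self _ zero_le_one
  · exact le_mul_of_one_le_left hL hsqrt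

end Transfer

theorem stmt_1_general :
    ∃ C : ℝ, 0 < C ∧
      ∀ (N k : ℕ) (σ2 : NNReal) (v : Fin N → ℝ) (δ : ℝ), 0 < δ → δ < 1 →
        ENNReal.ofReal (1 - δ) ≤
          iidGaussVec N k σ2
            {B | |∑ i, ((∑ j, (B i j) ^ 2) - k * σ2) * (v i) ^ 2|
              ≤ C * (σ2 * √(k * Real.log (1 / δ)) * lpNorm 4 v ^ 2
                  + σ2 * Real.log (1 / δ) * supNorm v ^ 2)} := by
  refine ⟨2 ^ 55, by positivity, fun N k σ2 v δ hδ0 hδ1 => ?_⟩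
  set L := Real.log (1 / δ) with hL
  have hexp : Real.exp (-L) = δ := by rw [hL, one_div, Real.log_inv, neg_neg, Real.exp_log hδ0]
  have hL0 : 0 ≤ L := Real.log_nonneg (one_le_one_div hδ0 hδ1.le)
  have hconc := one_sub_exp_neg_le_measureReal_abs_centeredChiSq_le
    (fun p : Fin N × Fin k => σ2 * v p.1 ^ 2) hL0
  rw [hexp, sqrt_sum_sq_replicate_mul_sq] at hconc
  rw [iidGaussVec_eq_map_stdGaussianPi]
  refine ((ENNReal.ofReal_le_ofReal hconc).trans_eq ofReal_measureReal).trans <|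
    (measure_mono fun x (hx : |centeredChiSq _ x| ≤ _) => ?_).trans
      (Measure.le_map_apply (Measurable.aemeasurable (by fun_prop)) _)
  rw [Set.mem_preimage, Set.mem_ofPred_eq, sum_sq_norm_sub_mul_eq_centeredChiSq]
  refine hx.trans ?_
  rw [Real.sqrt_mul k.cast_nonneg]
  gcongr 2 ^ 55 * (?_ + ?_)
  · exact le_of_eq (by ring)
  · calc _ ≤ σ2 * supNorm v ^ 2 * L := by gcongr; exact norm_replicate_mul_sq_le k σ2 v
      _ = σ2 * L * supNorm v ^ 2 := by ring

/-- with `b_1, …, b_N` i.i.d. `N(0, (1/N) I_{n-1})` and `v ∈ ℝ^N` fixed, there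
is a universal constant `C > 0` such that for any `δ ∈ (0,1)`, with probability at least
`1 - δ`, `|∑_i (‖b_i‖² - (n-1)/N) v_i²| ≤ C (√(n log(1/δ))/N ‖v‖₄² + √n log(1/δ)/N ‖v‖_∞²)`. -/
theorem stmt_1 :
    ∃ C : ℝ, 0 < C ∧
      ∀ (N n : ℕ) (v : Fin N → ℝ) (δ : ℝ), 1 ≤ n → n ≤ N → 0 < δ → δ < 1 →
        ENNReal.ofReal (1 - δ) ≤
          (iidGaussVec N (n - 1) ((N : NNReal))⁻¹)
            {B | |∑ i, ((∑ j, (B i j) ^ 2) - ((n : ℝ) - 1) / N) * (v i) ^ 2|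
              ≤ C * (Real.sqrt (n * Real.log (1 / δ)) / N * lpNorm 4 v ^ 2
                  + Real.sqrt n * Real.log (1 / δ) / N * supNorm v ^ 2)} := by
  obtain ⟨C, hC, hgeneral⟩ := stmt_1_general
  refine ⟨C, hC, fun N n v δ hn _ hδ0 hδ1 => ?_⟩
  have hL : 0 ≤ Real.log (1 / δ) := Real.log_nonneg (one_le_one_div hδ0 hδ1.le)
  exact (hgeneral N (n - 1) (N : NNReal)⁻¹ v δ hδ0 hδ1).trans <|
    measure_mono (deviation_le_subset_deviation_le hn v hC.le hL)
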